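/- Let f be a primitive nondegenerate quadratic form in 3 variables that is integral over ℤ₂. Then f is similar over ℤ₂ to a form of one of the following five kinds: (1) a diagonal form ⟨1, δ2^r, ε2^s⟩ with units δ, ε ∈ ℤ₂ˣ and 0 ≤ r ≤ s; (2) X² + 2^r·YZ with r ≥ 0; (3) XY + 2^r·Z² with r ≥ 0; (4) X² + 2^r·(Y² + YZ + Z²) with r ≥ 0; (5) X² + XY + Y² + 2^r·Z² with r ≥ 0. -/

import Mathlib

/-- The Gram matrix `M_f` of a quadratic form `f` in `n` variables. -/
noncomputable def gramMatrix {R : Type*} [CommRing R] {n : ℕ}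
    (f : QuadraticForm R (Fin n → R)) : Matrix (Fin n) (Fin n) R :=
  Matrix.of fun i j => QuadraticMap.polar f (Pi.single i 1) (Pi.single j 1)

/-- The ideal generated by the coefficients `a_{ij}` of a quadratic form
`f = Σ_{i ≤ j} a_{ij} X_i X_j`. -/
noncomputable def coeffIdeal {R : Type*} [CommRing R] {n : ℕ}
    (f : QuadraticForm R (Fin n → R)) : Ideal R :=
  Ideal.span ((Set.range fun i => f (Pi.single i 1)) ∪
    (Set.range fun ij : Fin n × Fin n =>
      QuadraticMap.polar f (Pi.single ij.1 1) (Pi.single ij.2 1)))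

/-- A quadratic form is primitive if the ideal generated by its coefficients is the whole ring. -/
noncomputable def IsPrimitiveForm {R : Type*} [CommRing R] {n : ℕ}
    (f : QuadraticForm R (Fin n → R)) : Prop :=
  coeffIdeal f = ⊤

/-- Two quadratic forms are similar if a unit multiple of one is isometric to the other. -/
def SimilarForm {R : Type*} [CommRing R] {n : ℕ}
    (f g : QuadraticForm R (Fin n → R)) : Prop :=
  ∃ u : Rˣ, ((u : R) • f).Equivalent g

/-!
Over a henselian local ring with residue field `𝔽₂`, a binary form `aX² + bXY + cY²` with `b` a unit
is isometric to `XY` if `a` or `c` is a non-unit and to `X² + XY + Y²` otherwise: Hensel's lemma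
finds a vector of value `0`, respectively `1`, and rescaling the other basis vector makes the middle
coefficient `1`.

A primitive ternary form has a unit coefficient. If a mixed coefficient is a unit, it spans with its
two variables a binary form of unit discriminant, which splits off as an orthogonal summand.
Otherwise some square coefficient is a unit and all mixed ones are divisible by `2`, so completing
the square splits off that variable. Either way the form becomes `kX² + (aY² + bYZ + cZ²)` with `b`
or `k` a unit. In the first case it remains to write `k = u * 2 ^ n` and divide by `u`. In the
second, divide by `k` and take the content `2 ^ r` out of the binary summand: the primitive form
that is left either has a unit middle coefficient or can be diagonalised by completing the square
again.
-/

open IsLocalRing QuadraticMap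

section CommRing

variable {R : Type*} [CommRing R]

/-- The binary quadratic form `aX² + bXY + cY²`. -/
noncomputable def binary (a b c : R) : QuadraticForm R (Fin 2 → R) :=
  Matrix.toQuadraticForm' !![a, b; 0, c]

/-- The ternary quadratic form `aX² + bXY + cXZ + dY² + eYZ + fZ²`, its coefficients being listed
row by row as the entries of an upper triangular matrix. In particular `ternary k 0 0 a b c` is the
orthogonal sum of `kX²` and `binary a b c`. -/
noncomputable def ternary (a b c d e f : R) : QuadraticForm R (Fin 3 → R) :=
  Matrix.toQuadraticForm' !![a, b, c; 0, d, e; 0, 0, f]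

theorem binary_apply (a b c : R) (x : Fin 2 → R) :
    binary a b c x = a * x 0 ^ 2 + b * x 0 * x 1 + c * x 1 ^ 2 := by
  simp only [binary, Matrix.toQuadraticForm', LinearMap.BilinMap.toQuadraticMap_apply,
    Matrix.toLinearMap₂'_apply, Fin.sum_univ_two, Matrix.of_apply, Matrix.cons_val',
    Matrix.cons_val, smul_eq_mul]
  ring

theorem ternary_apply (a b c d e f : R) (x : Fin 3 → R) :
    ternary a b c d e f x = a * x 0 ^ 2 + b * x 0 * x 1 + c * x 0 * x 2 + d * x 1 ^ 2
      + e * x 1 * x 2 + f * x 2 ^ 2 := by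
  simp only [ternary, Matrix.toQuadraticForm', LinearMap.BilinMap.toQuadraticMap_apply,
    Matrix.toLinearMap₂'_apply, Fin.sum_univ_three, Matrix.of_apply, Matrix.cons_val',
    Matrix.cons_val, smul_eq_mul]
  ring

theorem smul_binary (u a b c : R) : u • binary a b c = binary (u * a) (u * b) (u * c) := by
  ext x
  simp only [smul_apply, binary_apply, smul_eq_mul]
  ring

theorem smul_ternary (u a b c d e f : R) :
    u • ternary a b c d e f = ternary (u * a) (u * b) (u * c) (u * d) (u * e) (u * f) := by
  ext x
  simp only [smul_apply, ternary_apply, smul_eq_mul]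
  ring

theorem weightedSumSquares_eq_ternary (a b c : R) :
    weightedSumSquares R ![a, b, c] = ternary a 0 0 b 0 c := by
  ext x
  simp [ternary_apply, weightedSumSquares_apply, Fin.sum_univ_three, pow_two]

theorem equivalent_of_apply_mulVec {n : Type*} [Fintype n] [DecidableEq n]
    {f g : QuadraticForm R (n → R)} (P : Matrix n n R) (hP : IsUnit P.det)
    (h : ∀ x, g x = f (P.mulVec x)) : f.Equivalent g :=
  QuadraticMap.Equivalent.symm
    ⟨⟨P.toLinearEquiv' (P.invertibleOfIsUnitDet hP), fun x => (h x).symm⟩⟩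

theorem smul_equivalent_smul {M N : Type*} [AddCommGroup M] [Module R M] [AddCommGroup N]
    [Module R N] {f : QuadraticForm R M} {g : QuadraticForm R N} (u : R) (h : f.Equivalent g) :
    (u • f).Equivalent (u • g) := by
  obtain ⟨φ⟩ := h
  exact ⟨⟨φ.toLinearEquiv, fun x => congrArg (u • ·) (φ.map_app x)⟩⟩

theorem equivalent_ternary {M : Type*} [AddCommGroup M] [Module R M] (Q : QuadraticForm R M)
    (v : Module.Basis (Fin 3) R M) :
    Q.Equivalent (ternary (Q (v 0)) (polar Q (v 0) (v 1)) (polar Q (v 0) (v 2))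
      (Q (v 1)) (polar Q (v 1) (v 2)) (Q (v 2))) := by
  have hrepr : ternary (Q (v 0)) (polar Q (v 0) (v 1)) (polar Q (v 0) (v 2)) (Q (v 1))
      (polar Q (v 1) (v 2)) (Q (v 2)) = Q.basisRepr v := by
    ext x
    simp only [ternary_apply, basisRepr_apply, Fin.sum_univ_three, QuadraticMap.map_add Q,
      polar_add_left, polar_smul_left, polar_smul_right, QuadraticMap.map_smul, smul_eq_mul]
    ring
  exact hrepr ▸ ⟨Q.isometryEquivBasisRepr v⟩

/-! ### Similarity and nondegeneracy -/

theorem SimilarForm.of_equivalent {n : ℕ} {f g : QuadraticForm R (Fin n → R)}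
    (h : f.Equivalent g) : SimilarForm f g :=
  ⟨1, by simpa using h⟩

theorem SimilarForm.smul_right {n : ℕ} (f : QuadraticForm R (Fin n → R)) (u : Rˣ) :
    SimilarForm f ((u : R) • f) :=
  ⟨u, QuadraticMap.Equivalent.refl _⟩

theorem SimilarForm.trans {n : ℕ} {f g h : QuadraticForm R (Fin n → R)}
    (hfg : SimilarForm f g) (hgh : SimilarForm g h) : SimilarForm f h := by
  obtain ⟨u, hu⟩ := hfg
  obtain ⟨v, hv⟩ := hgh
  refine ⟨v * u, ?_⟩
  rw [Units.val_mul, mul_smul]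
  exact (smul_equivalent_smul (v : R) hu).trans hv

theorem gramMatrix_eq_toMatrix₂' {n : ℕ} (f : QuadraticForm R (Fin n → R)) :
    gramMatrix f = LinearMap.toMatrix₂' R f.polarBilin := by
  ext i j
  simp [gramMatrix, LinearMap.toMatrix₂'_apply]

theorem det_gramMatrix_ne_zero_of_equivalent {n : ℕ} {f g : QuadraticForm R (Fin n → R)}
    (h : f.Equivalent g) (hf : (gramMatrix f).det ≠ 0) : (gramMatrix g).det ≠ 0 := by
  obtain ⟨φ⟩ := h
  have hcomp : f = g.comp φ.toLinearEquiv.toLinearMap := by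
    ext x
    exact (φ.map_app x).symm
  contrapose! hf
  rw [gramMatrix_eq_toMatrix₂'] at hf ⊢
  rw [hcomp, polarBilin_comp, LinearMap.toMatrix₂'_compl₁₂, Matrix.det_mul, Matrix.det_mul, hf,
    mul_zero, zero_mul]

theorem gramMatrix_ternary (a b c d e f : R) :
    gramMatrix (ternary a b c d e f) = !![2 * a, b, c; b, 2 * d, e; c, e, 2 * f] := by
  ext i j
  fin_cases i <;> fin_cases j <;> simp [gramMatrix, polar, ternary_apply] <;> ring

theorem det_gramMatrix_ternary (k a b c : R) :
    (gramMatrix (ternary k 0 0 a b c)).det = -(2 * k * discrim a b c) := by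
  simp only [gramMatrix_ternary, Matrix.det_fin_three, Matrix.of_apply, Matrix.cons_val',
    Matrix.cons_val, discrim]
  ring

/-! ### Changes of variables -/

theorem binary_equivalent_binary {a b c a' b' c' : R} (p q r s : R)
    (hdet : IsUnit (p * s - q * r)) (ha : a * p ^ 2 + b * p * r + c * r ^ 2 = a')
    (hb : 2 * a * p * q + b * (p * s + q * r) + 2 * c * r * s = b')
    (hc : a * q ^ 2 + b * q * s + c * s ^ 2 = c') :
    (binary a b c).Equivalent (binary a' b' c') := by
  subst ha hb hc
  refine equivalent_of_apply_mulVec !![p, q; r, s] (by simpa [Matrix.det_fin_two] using hdet)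
    fun x => ?_
  simp only [binary_apply, Matrix.cons_mulVec, dotProduct, Fin.sum_univ_two, Matrix.cons_val]
  ring

theorem binary_equivalent_swap (a b c : R) : (binary a b c).Equivalent (binary c b a) :=
  binary_equivalent_binary 0 1 1 0 (by simp) (by ring) (by ring) (by ring)

theorem binary_equivalent_diagonal (u : Rˣ) (b c : R) :
    (binary (u : R) (2 * b) c).Equivalent (binary (u : R) 0 (c - ↑u⁻¹ * b ^ 2)) := by
  have hu : (u : R) * ↑u⁻¹ = 1 := u.mul_inv
  refine binary_equivalent_binary 1 (-↑u⁻¹ * b) 0 1 (by simp) (by ring) ?_ ?_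
  · linear_combination (-2 * b) * hu
  · linear_combination (b ^ 2 * ↑u⁻¹) * hu

theorem ternary_equivalent_prod (k a b c : R) :
    (ternary k 0 0 a b c).Equivalent ((k • QuadraticMap.sq (R := R)).prod (binary a b c)) := by
  refine ⟨⟨(Fin.consLinearEquiv R fun _ : Fin 3 => R).symm, fun x => ?_⟩⟩
  change k * (x 0 * x 0) + binary a b c (Fin.tail x) = _
  simp only [binary_apply, ternary_apply, Fin.tail, Fin.succ_zero_eq_one, Fin.succ_one_eq_two]
  ring

theorem ternary_equivalent_of_binary_equivalent (k : R) {a b c a' b' c' : R}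
    (h : (binary a b c).Equivalent (binary a' b' c')) :
    (ternary k 0 0 a b c).Equivalent (ternary k 0 0 a' b' c') :=
  (ternary_equivalent_prod k a b c).trans <|
    (QuadraticMap.Equivalent.prod (.refl _) h).trans (ternary_equivalent_prod k a' b' c').symm

theorem ternary_equivalent_rotate (k a b c : R) :
    (ternary k 0 0 a b c).Equivalent (ternary a b 0 c 0 k) := by
  refine equivalent_of_apply_mulVec !![0, 0, 1; 1, 0, 0; 0, 1, 0] ?_ fun x => ?_
  · simp [Matrix.det_fin_three]
  · simp only [ternary_apply, Matrix.cons_mulVec, dotProduct, Fin.sum_univ_three, Matrix.cons_val]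
    ring

theorem exists_ternary_equivalent_of_isUnit {k : R} (hk : IsUnit k) (p q a b c : R) :
    ∃ a' b' c',
      (ternary k (2 * p) (2 * q) a b c).Equivalent (ternary k 0 0 a' b' c') := by
  obtain ⟨v, hv⟩ := hk.exists_right_inv
  refine ⟨a - v * p ^ 2, b - 2 * v * p * q, c - v * q ^ 2,
    equivalent_of_apply_mulVec !![1, -v * p, -v * q; 0, 1, 0; 0, 0, 1] ?_ fun x => ?_⟩
  · simp [Matrix.det_fin_three]
  · simp only [ternary_apply, Matrix.cons_mulVec, dotProduct, Fin.sum_univ_three, Matrix.cons_val]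
    linear_combination (2 * x 0 * (p * x 1 + q * x 2) - v * (p * x 1 + q * x 2) ^ 2) * hv

theorem exists_ternary_equivalent_of_isUnit_discrim {a b c : R} (h : IsUnit (discrim a b c))
    (k p q : R) : ∃ k', (ternary k p q a b c).Equivalent (ternary k' 0 0 a b c) := by
  obtain ⟨w, hw⟩ := h.exists_right_inv
  rw [discrim] at hw
  -- Cramer's rule: `(1, α, β)` is orthogonal to the last two basis vectors.
  obtain ⟨α, β, hα, hβ⟩ : ∃ α β, 2 * a * α + b * β + p = 0 ∧ b * α + 2 * c * β + q = 0 :=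
    ⟨w * (2 * c * p - b * q), w * (2 * a * q - b * p),
      by linear_combination -p * hw, by linear_combination -q * hw⟩
  refine ⟨k + p * α + q * β + a * α ^ 2 + b * α * β + c * β ^ 2,
    equivalent_of_apply_mulVec !![1, 0, 0; α, 1, 0; β, 0, 1] ?_ fun x => ?_⟩
  · simp [Matrix.det_fin_three]
  · simp only [ternary_apply, Matrix.cons_mulVec, dotProduct, Fin.sum_univ_three, Matrix.cons_val]
    linear_combination -x 0 * x 1 * hα - x 0 * x 2 * hβ

end CommRing

/-! ### Local rings -/

section IsLocalRing

variable {R : Type*} [CommRing R] [IsLocalRing R]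

theorem isUnit_discrim {b : R} (hb : IsUnit b) (h2 : (2 : R) ∈ maximalIdeal R) (a c : R) :
    IsUnit (discrim a b c) := by
  rw [← residue_ne_zero_iff_isUnit] at hb ⊢
  have h4 : residue R 4 = 0 := by
    rw [residue_eq_zero_iff, show (4 : R) = 2 * 2 by norm_num]
    exact Ideal.mul_mem_left _ _ h2
  simpa [discrim, h4] using hb

theorem isUnit_add_of_mem_maximalIdeal {x y : R}
    (hx : IsUnit x) (hy : y ∈ maximalIdeal R) : IsUnit (x + y) := by
  rw [← residue_ne_zero_iff_isUnit] at hx ⊢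
  rwa [map_add, (residue_eq_zero_iff y).2 hy, add_zero]

theorem sub_one_mem_maximalIdeal (hcard : Nat.card (ResidueField R) = 2) {x : R}
    (hx : IsUnit x) : x - 1 ∈ maximalIdeal R := by
  have hres : residue R x = 1 := ((Nat.card_eq_two_iff' 0).1 hcard).unique
    ((residue_ne_zero_iff_isUnit x).2 hx) one_ne_zero
  rw [← residue_eq_zero_iff, map_sub, map_one, hres, sub_self]

theorem two_mem_maximalIdeal (hcard : Nat.card (ResidueField R) = 2) :
    (2 : R) ∈ maximalIdeal R := by
  by_contra h
  have hone := sub_one_mem_maximalIdeal hcard (notMem_maximalIdeal.1 h)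
  rw [show (2 : R) - 1 = 1 by norm_num] at hone
  exact (mem_maximalIdeal 1).1 hone isUnit_one

theorem IsPrimitiveForm.exists_isUnit {n : ℕ} {f : QuadraticForm R (Fin n → R)}
    (hf : IsPrimitiveForm f) : (∃ i, IsUnit (f (Pi.single i 1))) ∨
      ∃ i j, i ≠ j ∧ IsUnit (polar f (Pi.single i 1) (Pi.single j 1)) := by
  by_contra! ⟨hdiag, hpolar⟩
  have hle : coeffIdeal f ≤ maximalIdeal R := by
    rw [coeffIdeal, Ideal.span_le]
    rintro x (⟨i, rfl⟩ | ⟨⟨i, j⟩, rfl⟩)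
    · exact hdiag i
    · obtain rfl | hij := eq_or_ne i j
      · simpa only [polar_self, smul_eq_mul, nsmul_eq_mul, SetLike.mem_coe] using
          Ideal.mul_mem_left (maximalIdeal R) _ (hdiag i)
      · exact hpolar i j hij
  exact (maximalIdeal.isMaximal R).ne_top (top_le_iff.1 (hf ▸ hle))

theorem IsPrimitiveForm.exists_equivalent_ternary (h2 : maximalIdeal R = Ideal.span {2})
    {f : QuadraticForm R (Fin 3 → R)} (hf : IsPrimitiveForm f) :
    ∃ k a b c, f.Equivalent (ternary k 0 0 a b c) ∧ (IsUnit k ∨ IsUnit b) := by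
  have hperm (σ : Equiv.Perm (Fin 3)) :=
    equivalent_ternary f ((Pi.basisFun R (Fin 3)).reindex σ.symm)
  simp only [Module.Basis.coe_reindex, Equiv.symm_symm, Function.comp_apply,
    Pi.basisFun_apply] at hperm
  by_cases hpolar : ∃ i j, i ≠ j ∧ IsUnit (polar f (Pi.single i 1) (Pi.single j 1))
  · obtain ⟨i, j, hij, hu⟩ := hpolar
    have hσ : ∀ i j : Fin 3, i ≠ j → ∃ σ : Equiv.Perm (Fin 3), σ 1 = i ∧ σ 2 = j := by decide
    obtain ⟨σ, rfl, rfl⟩ := hσ i j hij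
    have h2mem : (2 : R) ∈ maximalIdeal R := h2 ▸ Ideal.mem_span_singleton_self 2
    obtain ⟨k, hk⟩ :=
      exists_ternary_equivalent_of_isUnit_discrim (isUnit_discrim hu h2mem _ _) _ _ _
    exact ⟨k, _, _, _, (hperm σ).trans hk, Or.inr hu⟩
  · obtain ⟨i, hu⟩ := hf.exists_isUnit.resolve_right hpolar
    have hdvd (j l) (hjl : j ≠ l) : 2 ∣ polar f (Pi.single j 1) (Pi.single l 1) := by
      rw [← Ideal.mem_span_singleton, ← h2]
      exact fun h => hpolar ⟨j, l, hjl, h⟩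
    have hσ := hperm (Equiv.swap 0 i)
    obtain ⟨p, hp⟩ := hdvd _ _ ((Equiv.swap 0 i).injective.ne zero_ne_one)
    obtain ⟨q, hq⟩ := hdvd _ _ ((Equiv.swap 0 i).injective.ne (show (0 : Fin 3) ≠ 2 by decide))
    rw [hp, hq, Equiv.swap_apply_left] at hσ
    obtain ⟨a, b, c, h⟩ := exists_ternary_equivalent_of_isUnit hu p q _ _ _
    exact ⟨_, a, b, c, hσ.trans h, Or.inl hu⟩

end IsLocalRing

/-! ### Binary forms with unit middle coefficient -/

section Henselian

variable {R : Type*} [CommRing R] [HenselianLocalRing R]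

open Polynomial in
theorem exists_mem_maximalIdeal_quadratic_eq_zero (a : R) {b c : R} (hb : IsUnit b)
    (hc : c ∈ maximalIdeal R) : ∃ t ∈ maximalIdeal R, a * t ^ 2 + b * t + c = 0 := by
  -- The polynomial need not be monic, so we look for `w = c / t`, a root of `X² + bX + ac`.
  obtain ⟨w, hroot, hw⟩ := HenselianLocalRing.is_henselian (X ^ 2 + C b * X + C (a * c))
    (by monicity!) (-b) (by simpa [pow_two] using Ideal.mul_mem_left _ a hc)
    (by
      convert hb.neg using 1
      simp only [derivative_add, derivative_X_pow, derivative_C_mul, derivative_X, derivative_C,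
        eval_add, eval_mul, eval_pow, eval_X, eval_C, eval_one, eval_zero, Nat.cast_ofNat]
      ring)
  have hwu : IsUnit w := by
    rw [← residue_eq_zero_iff, map_sub, sub_eq_zero] at hw
    rw [← residue_ne_zero_iff_isUnit, hw, residue_ne_zero_iff_isUnit]
    exact hb.neg
  obtain ⟨v, hv⟩ := hwu.exists_right_inv
  have hroot' : w ^ 2 + b * w + a * c = 0 := by simpa using hroot
  refine ⟨c * v, Ideal.mul_mem_right _ _ hc, ?_⟩
  linear_combination c * v ^ 2 * hroot' - (b * c * v + c * (w * v + 1)) * hv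

theorem binary_equivalent_hyperbolic (a : R) {b c : R} (hb : IsUnit b)
    (hc : c ∈ maximalIdeal R) : (binary a b c).Equivalent (binary 0 1 0) := by
  obtain ⟨t, htmem, ht⟩ := exists_mem_maximalIdeal_quadratic_eq_zero a hb hc
  obtain ⟨v, hv⟩ :=
    (isUnit_add_of_mem_maximalIdeal hb (Ideal.mul_mem_left _ (2 * a) htmem)).exists_right_inv
  -- The isotropic vector `(t, 1)`, and `(v, 0)` corrected by a multiple of it to be isotropic.
  refine binary_equivalent_binary (v - a * v ^ 2 * t) t (-a * v ^ 2) 1 ?_ ?_ ?_ ?_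
  · convert IsUnit.of_mul_eq_one_right _ hv using 1
    ring
  · linear_combination (a * v ^ 2) ^ 2 * ht - a * v ^ 2 * hv
  · linear_combination hv - 2 * a * v ^ 2 * ht
  · linear_combination ht

theorem exists_binary_equivalent_one_one (hcard : Nat.card (ResidueField R) = 2) {a b c : R}
    (ha : IsUnit a) (hb : IsUnit b) (hc : IsUnit c) :
    ∃ k, IsUnit k ∧ (binary a b c).Equivalent (binary k 1 1) := by
  obtain ⟨t, htmem, ht⟩ :=
    exists_mem_maximalIdeal_quadratic_eq_zero a hb (sub_one_mem_maximalIdeal hcard hc)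
  obtain ⟨v, hv⟩ :=
    (isUnit_add_of_mem_maximalIdeal hb (Ideal.mul_mem_left _ (2 * a) htmem)).exists_right_inv
  have hvu : IsUnit v := IsUnit.of_mul_eq_one_right _ hv
  refine ⟨a * v ^ 2, ha.mul (hvu.pow 2),
    binary_equivalent_binary v t 0 1 (by simpa using hvu) (by ring) ?_ ?_⟩
  · linear_combination hv
  · linear_combination ht

theorem binary_one_one_equivalent (hcard : Nat.card (ResidueField R) = 2) {k : R}
    (hk : IsUnit k) : (binary k 1 1).Equivalent (binary 1 1 1) := by
  have h2 := two_mem_maximalIdeal hcard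
  have hunit : IsUnit (1 - 4 * k) := by
    convert isUnit_add_of_mem_maximalIdeal isUnit_one (Ideal.mul_mem_left _ (-(2 * k)) h2) using 1
    ring
  -- `(1 - 2s, s)` has polar product `1` with `(0, 1)`; the equation says that its value is `1`.
  obtain ⟨s, -, hs⟩ :=
    exists_mem_maximalIdeal_quadratic_eq_zero (4 * k - 1) hunit
      (sub_one_mem_maximalIdeal hcard hk)
  refine binary_equivalent_binary (1 - 2 * s) 0 s 1 ?_ ?_ (by ring) (by ring)
  · convert isUnit_add_of_mem_maximalIdeal isUnit_one (Ideal.mul_mem_left _ (-s) h2) using 1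
    ring
  · linear_combination hs

theorem binary_equivalent_of_isUnit (hcard : Nat.card (ResidueField R) = 2) (a : R) {b : R}
    (hb : IsUnit b) (c : R) :
    (binary a b c).Equivalent (binary 0 1 0) ∨ (binary a b c).Equivalent (binary 1 1 1) := by
  by_cases hc : IsUnit c
  · by_cases ha : IsUnit a
    · obtain ⟨k, hk, hequiv⟩ := exists_binary_equivalent_one_one hcard ha hb hc
      exact Or.inr (hequiv.trans (binary_one_one_equivalent hcard hk))
    · exact Or.inl ((binary_equivalent_swap a b c).trans (binary_equivalent_hyperbolic c hb ha))
  · exact Or.inl (binary_equivalent_hyperbolic a hb hc)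

end Henselian

/-! ### Discrete valuation rings with uniformizer `2` -/

section DiscreteValuationRing

variable {R : Type*} [CommRing R] [IsDomain R] [IsDiscreteValuationRing R]

theorem exists_eq_pow_smul_isUnit {ϖ : R} (hϖ : Irreducible ϖ) {ι : Type*} {x : ι → R}
    (hx : x ≠ 0) : ∃ (r : ℕ) (y : ι → R), x = ϖ ^ r • y ∧ ∃ i, IsUnit (y i) := by
  obtain ⟨j, hj⟩ := Function.ne_iff.1 hx
  have : Nonempty ι := ⟨j⟩
  let i := Function.argmin (IsDiscreteValuationRing.addVal R ∘ x)
  have hdvd (l : ι) : x i ∣ x l :=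
    IsDiscreteValuationRing.addVal_le_iff_dvd.1
      (Function.argmin_le (f := IsDiscreteValuationRing.addVal R ∘ x) l)
  have hi : x i ≠ 0 := fun h => hj (zero_dvd_iff.1 (h ▸ hdvd j))
  obtain ⟨r, u, hu⟩ := IsDiscreteValuationRing.eq_unit_mul_pow_irreducible hi hϖ
  have hpow (l : ι) : ϖ ^ r ∣ x l := (Dvd.intro_left _ hu.symm).trans (hdvd l)
  choose y hy using hpow
  have hyi : y i = u := mul_left_cancel₀ (pow_ne_zero r hϖ.ne_zero) (by rw [← hy, hu, mul_comm])
  exact ⟨r, y, funext hy, i, hyi ▸ u.isUnit⟩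

theorem exists_binary_eq_pow_smul {ϖ : R} (hϖ : Irreducible ϖ) {a b c : R}
    (h : discrim a b c ≠ 0) : ∃ (r : ℕ) (a' b' c' : R), binary a b c = ϖ ^ r • binary a' b' c' ∧
      discrim a' b' c' ≠ 0 ∧ (IsUnit a' ∨ IsUnit b' ∨ IsUnit c') := by
  have hne : ![a, b, c] ≠ 0 := by
    contrapose! h
    obtain ⟨rfl, rfl, rfl⟩ : a = 0 ∧ b = 0 ∧ c = 0 := by simpa using h
    simp [discrim]
  obtain ⟨r, y, hy, hunit⟩ := exists_eq_pow_smul_isUnit hϖ hne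
  obtain ⟨rfl, rfl, rfl⟩ : a = ϖ ^ r * y 0 ∧ b = ϖ ^ r * y 1 ∧ c = ϖ ^ r * y 2 :=
    ⟨congrFun hy 0, congrFun hy 1, congrFun hy 2⟩
  refine ⟨r, y 0, y 1, y 2, (smul_binary _ _ _ _).symm, ?_,
    by simpa [Fin.exists_fin_succ] using hunit⟩
  contrapose! h
  rw [discrim] at h ⊢
  linear_combination (ϖ ^ r) ^ 2 * h

theorem exists_binary_equivalent_diagonal (h2 : Irreducible (2 : R)) {a b c : R}
    (ha : IsUnit a) (hb : ¬IsUnit b) (h : discrim a b c ≠ 0) :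
    ∃ (u v : Rˣ) (n : ℕ), (binary a b c).Equivalent (binary (u : R) 0 (v * 2 ^ n)) := by
  obtain ⟨u, rfl⟩ := ha
  obtain ⟨b, rfl⟩ : 2 ∣ b := by
    rwa [← Ideal.mem_span_singleton, ← h2.maximalIdeal_eq]
  have hne : c - ↑u⁻¹ * b ^ 2 ≠ 0 := by
    contrapose! h
    rw [discrim]
    linear_combination -4 * (u : R) * h - 4 * b ^ 2 * u.mul_inv
  obtain ⟨n, v, hv⟩ := IsDiscreteValuationRing.eq_unit_mul_pow_irreducible hne h2
  exact ⟨u, v, n, hv ▸ binary_equivalent_diagonal u b c⟩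

theorem binary_equivalent_trichotomy [HenselianLocalRing R] (h2 : Irreducible (2 : R))
    (hcard : Nat.card (ResidueField R) = 2) {a b c : R} (h : discrim a b c ≠ 0)
    (hunit : IsUnit a ∨ IsUnit b ∨ IsUnit c) :
    (binary a b c).Equivalent (binary 0 1 0) ∨ (binary a b c).Equivalent (binary 1 1 1) ∨
      ∃ (u v : Rˣ) (n : ℕ), (binary a b c).Equivalent (binary (u : R) 0 (v * 2 ^ n)) := by
  by_cases hb : IsUnit b
  · exact (binary_equivalent_of_isUnit hcard a hb c).imp_right Or.inl
  refine Or.inr (Or.inr ?_)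
  by_cases ha : IsUnit a
  · exact exists_binary_equivalent_diagonal h2 ha hb h
  · have hc : IsUnit c := (hunit.resolve_left ha).resolve_left hb
    have hswap : discrim c b a ≠ 0 := by
      convert h using 1
      simp only [discrim]
      ring
    obtain ⟨u, v, n, hdiag⟩ := exists_binary_equivalent_diagonal h2 hc hb hswap
    exact ⟨u, v, n, (binary_equivalent_swap a b c).trans hdiag⟩

/-! ### Ternary forms -/

/-- The five families of normal forms, up to similarity, of primitive nondegenerate ternary
quadratic forms over a henselian discrete valuation ring with uniformizer `2` and residue field
`𝔽₂`. Here `hyperbolic` stands for the plane `XY` and `elliptic` for `X² + XY + Y²`. -/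
inductive IsTernaryNormalForm : QuadraticForm R (Fin 3 → R) → Prop
  | diagonal (δ ε : Rˣ) {r s : ℕ} (hrs : r ≤ s) :
      IsTernaryNormalForm (ternary 1 0 0 (δ * 2 ^ r) 0 (ε * 2 ^ s))
  | square_add_hyperbolic (r : ℕ) : IsTernaryNormalForm (ternary 1 0 0 0 (2 ^ r) 0)
  | hyperbolic_add_square (r : ℕ) : IsTernaryNormalForm (ternary 0 1 0 0 0 (2 ^ r))
  | square_add_elliptic (r : ℕ) : IsTernaryNormalForm (ternary 1 0 0 (2 ^ r) (2 ^ r) (2 ^ r))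
  | elliptic_add_square (r : ℕ) : IsTernaryNormalForm (ternary 1 1 0 1 0 (2 ^ r))

variable [HenselianLocalRing R]

theorem exists_normalForm_similarForm_of_isUnit_middle (h2 : Irreducible (2 : R))
    (hcard : Nat.card (ResidueField R) = 2) {k b : R} (hk : k ≠ 0) (hb : IsUnit b) (a c : R) :
    ∃ g, IsTernaryNormalForm g ∧ SimilarForm (ternary k 0 0 a b c) g := by
  obtain ⟨n, u, rfl⟩ := IsDiscreteValuationRing.eq_unit_mul_pow_irreducible hk h2
  have hscale := SimilarForm.smul_right (ternary (u * 2 ^ n : R) 0 0 a b c) u⁻¹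
  rw [smul_ternary, mul_zero, Units.inv_mul_cancel_left] at hscale
  have hreduce {a' b' c' : R}
      (h : (binary (↑u⁻¹ * a) (↑u⁻¹ * b) (↑u⁻¹ * c)).Equivalent (binary a' b' c')) :
      SimilarForm (ternary (u * 2 ^ n : R) 0 0 a b c) (ternary a' b' 0 c' 0 (2 ^ n)) := by
    have hrotate := ternary_equivalent_rotate (2 ^ n) a' b' c'
    exact hscale.trans
      (.of_equivalent ((ternary_equivalent_of_binary_equivalent _ h).trans hrotate))
  obtain h | h := binary_equivalent_of_isUnit hcard (↑u⁻¹ * a) (u⁻¹.isUnit.mul hb) (↑u⁻¹ * c)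
  · exact ⟨_, .hyperbolic_add_square n, hreduce h⟩
  · exact ⟨_, .elliptic_add_square n, hreduce h⟩

theorem exists_normalForm_equivalent_one_add_binary (h2 : Irreducible (2 : R))
    (hcard : Nat.card (ResidueField R) = 2) {a b c : R} (h : discrim a b c ≠ 0) :
    ∃ g, IsTernaryNormalForm g ∧ (ternary 1 0 0 a b c).Equivalent g := by
  obtain ⟨r, a', b', c', hpow, hdisc, hunit⟩ := exists_binary_eq_pow_smul h2 h
  have hreduce {x y z : R} (h : (binary a' b' c').Equivalent (binary x y z)) :
      (ternary 1 0 0 a b c).Equivalent (ternary 1 0 0 (2 ^ r * x) (2 ^ r * y) (2 ^ r * z)) := by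
    apply ternary_equivalent_of_binary_equivalent
    rw [hpow, ← smul_binary]
    exact smul_equivalent_smul _ h
  obtain h | h | ⟨u, v, n, h⟩ := binary_equivalent_trichotomy h2 hcard hdisc hunit
  · exact ⟨_, .square_add_hyperbolic r, by simpa using hreduce h⟩
  · exact ⟨_, .square_add_elliptic r, by simpa using hreduce h⟩
  · refine ⟨_, .diagonal u v (Nat.le_add_right r n), ?_⟩
    convert hreduce h using 2 <;> ring

theorem exists_normalForm_similarForm_of_isUnit_left (h2 : Irreducible (2 : R))
    (hcard : Nat.card (ResidueField R) = 2) {k a b c : R} (hk : IsUnit k)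
    (h : discrim a b c ≠ 0) :
    ∃ g, IsTernaryNormalForm g ∧ SimilarForm (ternary k 0 0 a b c) g := by
  obtain ⟨u, rfl⟩ := hk
  have hscale := SimilarForm.smul_right (ternary (u : R) 0 0 a b c) u⁻¹
  rw [smul_ternary, mul_zero, Units.inv_mul] at hscale
  have hdisc : discrim (↑u⁻¹ * a) (↑u⁻¹ * b) (↑u⁻¹ * c) ≠ 0 := by
    convert mul_ne_zero (pow_ne_zero 2 u⁻¹.ne_zero) h using 1
    simp only [discrim]
    ring
  obtain ⟨g, hg, hequiv⟩ := exists_normalForm_equivalent_one_add_binary h2 hcard hdisc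
  exact ⟨g, hg, hscale.trans (.of_equivalent hequiv)⟩

theorem IsPrimitiveForm.exists_normalForm_similarForm (h2 : Irreducible (2 : R))
    (hcard : Nat.card (ResidueField R) = 2) {f : QuadraticForm R (Fin 3 → R)}
    (hprim : IsPrimitiveForm f) (hnd : (gramMatrix f).det ≠ 0) :
    ∃ g, IsTernaryNormalForm g ∧ SimilarForm f g := by
  obtain ⟨k, a, b, c, hsplit, hunit⟩ := hprim.exists_equivalent_ternary h2.maximalIdeal_eq
  have hdet := det_gramMatrix_ne_zero_of_equivalent hsplit hnd
  rw [det_gramMatrix_ternary, neg_ne_zero] at hdet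
  obtain ⟨g, hg, hsim⟩ : ∃ g, IsTernaryNormalForm g ∧ SimilarForm (ternary k 0 0 a b c) g := by
    obtain hk | hb := hunit
    · exact exists_normalForm_similarForm_of_isUnit_left h2 hcard hk (right_ne_zero_of_mul hdet)
    · exact exists_normalForm_similarForm_of_isUnit_middle h2 hcard
        (right_ne_zero_of_mul (left_ne_zero_of_mul hdet)) hb a c
  exact ⟨g, hg, (SimilarForm.of_equivalent hsplit).trans hsim⟩

theorem stmt_12_general (h2 : Irreducible (2 : R)) (hcard : Nat.card (ResidueField R) = 2)
    (f : QuadraticForm R (Fin 3 → R)) (hprim : IsPrimitiveForm f)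
    (hnd : (gramMatrix f).det ≠ 0) :
    (∃ (δ ε : Rˣ) (r s : ℕ), r ≤ s ∧
      SimilarForm f (weightedSumSquares R ![1, (δ : R) * 2 ^ r, (ε : R) * 2 ^ s])) ∨
    (∃ r : ℕ, SimilarForm f (Matrix.toQuadraticForm' !![1, 0, 0; 0, 0, 2 ^ r; 0, 0, 0])) ∨
    (∃ r : ℕ, SimilarForm f (Matrix.toQuadraticForm' !![0, 1, 0; 0, 0, 0; 0, 0, 2 ^ r])) ∨
    (∃ r : ℕ, SimilarForm f
      (Matrix.toQuadraticForm' !![1, 0, 0; 0, 2 ^ r, 2 ^ r; 0, 0, 2 ^ r])) ∨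
    (∃ r : ℕ, SimilarForm f (Matrix.toQuadraticForm' !![1, 1, 0; 0, 1, 0; 0, 0, 2 ^ r])) := by
  obtain ⟨g, hg, hsim⟩ := hprim.exists_normalForm_similarForm h2 hcard hnd
  cases hg with
  | diagonal δ ε hrs =>
    exact Or.inl ⟨δ, ε, _, _, hrs, by rwa [weightedSumSquares_eq_ternary]⟩
  | square_add_hyperbolic r => exact Or.inr (Or.inl ⟨r, hsim⟩)
  | hyperbolic_add_square r => exact Or.inr (Or.inr (Or.inl ⟨r, hsim⟩))
  | square_add_elliptic r => exact Or.inr (Or.inr (Or.inr (Or.inl ⟨r, hsim⟩)))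
  | elliptic_add_square r => exact Or.inr (Or.inr (Or.inr (Or.inr ⟨r, hsim⟩)))

end DiscreteValuationRing

/-! ### The 2-adic integers -/

section PadicInt

variable {p : ℕ} [Fact p.Prime]

instance : HenselianLocalRing ℤ_[p] where
  is_henselian f hf a₀ h₀ h₁ :=
    HenselianRing.is_henselian (I := maximalIdeal ℤ_[p]) f hf a₀ h₀ (h₁.map _)

theorem card_residueField_padicInt : Nat.card (ResidueField ℤ_[p]) = p := by
  rw [Nat.card_congr PadicInt.residueField.toEquiv, Nat.card_zmod]

end PadicInt

theorem stmt_12 (f : QuadraticForm ℤ_[2] (Fin 3 → ℤ_[2]))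
    (hprim : IsPrimitiveForm f) (hnd : (gramMatrix f).det ≠ 0) :
    (∃ (δ ε : ℤ_[2]ˣ) (r s : ℕ), r ≤ s ∧
      SimilarForm f (QuadraticMap.weightedSumSquares ℤ_[2]
        ![1, (δ : ℤ_[2]) * 2 ^ r, (ε : ℤ_[2]) * 2 ^ s])) ∨
    (∃ r : ℕ, SimilarForm f
      (Matrix.toQuadraticMap' (R := ℤ_[2]) !![1, 0, 0; 0, 0, 2 ^ r; 0, 0, 0])) ∨
    (∃ r : ℕ, SimilarForm f
      (Matrix.toQuadraticMap' (R := ℤ_[2]) !![0, 1, 0; 0, 0, 0; 0, 0, 2 ^ r])) ∨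
    (∃ r : ℕ, SimilarForm f
      (Matrix.toQuadraticMap' (R := ℤ_[2]) !![1, 0, 0; 0, 2 ^ r, 2 ^ r; 0, 0, 2 ^ r])) ∨
    (∃ r : ℕ, SimilarForm f
      (Matrix.toQuadraticMap' (R := ℤ_[2]) !![1, 1, 0; 0, 1, 0; 0, 0, 2 ^ r])) :=
  stmt_12_general (by exact_mod_cast PadicInt.irreducible_p (p := 2)) card_residueField_padicInt
    f hprim hnd
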